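/- Let F be a reduced convex foliation of degree d ≥ 1 on ℙ²(ℂ) defined by ω = a dx + b dy + c dz (so F admits 3d pairwise non-proportional invariant lines), and suppose the line z = 0 is invariant, i.e. z divides both a and b. Define A_d(x,y) = (∂a/∂z)(x,y,0) and B_d(x,y) = (∂b/∂z)(x,y,0), which are homogeneous of degree d and satisfy x·A_d + y·B_d = −c(x,y,0). Then: (i) A_d and B_d have no common factor; (ii) every linear factor of D = (∂A_d/∂x)(∂B_d/∂y) − (∂A_d/∂y)(∂B_d/∂x) divides x·A_d + y·B_d (i.e. the homogeneous foliation defined by A_d dx + B_d dy is convex); and (iii) x·A_d + y·B_d is squarefree, i.e. it is a product of d+1 pairwise non-proportional linear forms. -/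

import Mathlib

/-!
Write `a = z α`, `b = z β`. In the chart `(x, y)` the foliation is then also defined by
`α dx + β dy`, with `α` and `β` coprime and homogeneous of degree `d`. Let `V = β ∂ₓ - α ∂ᵧ` be its
tangent field. The inflection polynomial `E = α V(β) - β V(α)` has degree `3d - 1`. It is nonzero:
otherwise every leaf lies in a line, so `α` and `β` keep a constant ratio along the tangent line at
a generic point, and their leading coefficients along that line show that `(β, -α)` is a zero of the
binary form `c(x, y, 0)`, which is impossible for coprime `α` and `β`. Each invariant line other
than `z = 0` divides `E`, so `E` is, up to a constant, the product of `3d - 1` of them.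

Restricting to `z = 0` sends `α`, `β` to `A`, `B` and `E` to the inflection polynomial `E₀` of
`A dx + B dy`. If `m` of the lines restrict to multiples of the same form `f`, they all have the
same image under `V` up to constants, so their product divides it; thus `f ^ m` divides both `E₀`
and the derivative of `f` along the restricted field. Since `-d E₀ = (x A + y B) D`, this tangency
makes `f` divide `x A + y B`, and a common factor `f` of `A` and `B`, or a factor `f ^ 2` of
`x A + y B`, would force `f ^ (m + 1) ∣ E₀`, although `m` is its multiplicity in `E₀`.
-/

open MvPolynomial

noncomputable section

/-- Polynomials in three variables `x = X 0`, `y = X 1`, `z = X 2` over `ℂ`. -/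
abbrev P3 : Type := MvPolynomial (Fin 3) ℂ

/-- The linear form `αx + βy + γz` with coefficient vector `l = (α, β, γ)`. -/
def lin (l : Fin 3 → ℂ) : P3 := C (l 0) * X 0 + C (l 1) * X 1 + C (l 2) * X 2

/-- The line `{αx + βy + γz = 0}` is invariant by the foliation defined by
`ω = a dx + b dy + c dz`: the linear form divides the coefficients of `ω ∧ dℓ`. -/
def InvLine (a b c : P3) (l : Fin 3 → ℂ) : Prop :=
  l ≠ 0 ∧
  lin l ∣ (C (l 1) * a - C (l 0) * b) ∧
  lin l ∣ (C (l 2) * a - C (l 0) * c) ∧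
  lin l ∣ (C (l 2) * b - C (l 1) * c)

/-- `(a, b, c)` defines a foliation of degree `d` on `ℙ²(ℂ)`: homogeneous of degree
`d+1`, without common factor, satisfying the Euler condition. -/
def IsFoliation (d : ℕ) (a b c : P3) : Prop :=
  a.IsHomogeneous (d + 1) ∧ b.IsHomogeneous (d + 1) ∧ c.IsHomogeneous (d + 1) ∧
  (∀ p : P3, p ∣ a → p ∣ b → p ∣ c → IsUnit p) ∧
  X 0 * a + X 1 * b + X 2 * c = 0

/-- Polynomials in two variables over `ℂ`. -/
abbrev P2 : Type := MvPolynomial (Fin 2) ℂ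

/-- Restriction to the line at infinity: `p(x, y, 0)`. -/
def atZ0 (p : P3) : P2 := aeval ![(X 0 : P2), X 1, 0] p

/-- The inflection polynomial `D = A_x B_y − A_y B_x`. -/
def Dpoly (A B : P2) : P2 :=
  pderiv 0 A * pderiv 1 B - pderiv 1 A * pderiv 0 B

/-- `A` and `B` have no common (non-unit) factor. -/
def NoCommonFactor (A B : P2) : Prop := ∀ p : P2, p ∣ A → p ∣ B → IsUnit p

/-- Convexity: every linear factor of `D` divides `xA + yB`. -/
def IsConvexPair (A B : P2) : Prop :=
  ∀ l : P2, l.IsHomogeneous 1 → l ≠ 0 → l ∣ Dpoly A B → l ∣ (X 0 * A + X 1 * B)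

/-- Two polynomials are proportional (one is a constant multiple of the other). -/
def Proportional (l₁ l₂ : P2) : Prop := ∃ t : ℂ, l₁ = C t * l₂ ∨ l₂ = C t * l₁

section Derivation

variable {R A : Type*} [CommSemiring R] [CommSemiring A] [Algebra R A] (D : Derivation R A A)
  {l f : A} {m : ℕ}

lemma pow_sub_one_dvd_derivation (hf : l ^ m ∣ f) : l ^ (m - 1) ∣ D f := by
  obtain ⟨g, rfl⟩ := hf
  rw [D.leibniz, D.leibniz_pow]
  simp only [smul_eq_mul, nsmul_eq_mul]
  exact dvd_add ((pow_dvd_pow l m.pred_le).mul_right _)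
    (((dvd_mul_right _ _).mul_left _).mul_left _)

lemma pow_dvd_derivation (hl : l ∣ D l) (hf : l ^ m ∣ f) : l ^ m ∣ D f := by
  obtain ⟨g, rfl⟩ := hf
  obtain ⟨h, hh⟩ := hl
  refine D.leibniz (l ^ m) g ▸ dvd_add (dvd_mul_right _ _) (Dvd.dvd.mul_left ?_ g)
  rcases m with _ | m
  · simp
  · rw [D.leibniz_pow, hh]
    exact ⟨(m + 1) * h, by
      simp only [add_tsub_cancel_right, nsmul_eq_mul, smul_eq_mul, Nat.cast_add, Nat.cast_one]
      ring⟩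

end Derivation

section Forms

open scoped Function

variable {σ : Type*} {K : Type*} [Field K]

lemma degree_of_mem_support {R : Type*} [CommSemiring R] {F : MvPolynomial σ R} {n : ℕ}
    (hF : F.IsHomogeneous n) {m : σ →₀ ℕ} (hm : m ∈ F.support) : m.degree = n := by
  rw [Finsupp.degree_eq_weight_one]
  exact hF (mem_support_iff.1 hm)

lemma not_isUnit_of_isHomogeneous {F : MvPolynomial σ K} {n : ℕ} (hF : F.IsHomogeneous n)
    (hn : n ≠ 0) : ¬ IsUnit F := by
  intro hu
  obtain ⟨c, -, rfl⟩ := isUnit_iff_eq_C_of_isReduced.1 hu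
  exact hn (hF.inj_right (isHomogeneous_C σ c) hu.ne_zero)

lemma irreducible_of_isHomogeneous_one {l : MvPolynomial σ K} (hl : l.IsHomogeneous 1)
    (h0 : l ≠ 0) : Irreducible l := by
  refine irreducible_of_totalDegree_eq_one (hl.totalDegree h0) fun c hc => ?_
  obtain ⟨m, hm⟩ := ne_zero_iff.1 h0
  exact isUnit_iff_ne_zero.2 fun h => hm (zero_dvd_iff.1 (h ▸ hc m))

lemma exists_C_mul_of_associated {F G : MvPolynomial σ K} (h : Associated F G) :
    ∃ t : K, t ≠ 0 ∧ G = C t * F := by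
  obtain ⟨u, rfl⟩ := h
  obtain ⟨t, ht, hu⟩ := isUnit_iff_eq_C_of_isReduced.1 u.isUnit
  exact ⟨t, ht.ne_zero, by rw [hu, mul_comm]⟩

lemma isHomogeneous_of_associated {F G : MvPolynomial σ K} {n : ℕ} (h : Associated F G)
    (hF : F.IsHomogeneous n) : G.IsHomogeneous n := by
  obtain ⟨t, -, rfl⟩ := exists_C_mul_of_associated h
  exact hF.C_mul t

lemma exists_pderiv_eq_C {R : Type*} [CommSemiring R] {l : MvPolynomial σ R}
    (hl : l.IsHomogeneous 1) (i : σ) :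
    ∃ p : R, pderiv i l = C p :=
  ⟨_, totalDegree_eq_zero_iff_eq_C.1 ((totalDegree_zero_iff_isHomogeneous _).2 hl.pderiv)⟩

lemma isHomogeneous_of_X_mul {R : Type*} [CommSemiring R] {F : MvPolynomial σ R} {n : ℕ} {i : σ}
    (h : (X i * F).IsHomogeneous (n + 1)) : F.IsHomogeneous n := by
  classical
  intro m hm
  have := h (d := Finsupp.single i 1 + m) (by rwa [coeff_X_mul])
  rw [map_add, Finsupp.weight_single, Pi.one_apply, smul_eq_mul, one_mul] at this
  omega

lemma prod_associated_of_dvd {ι : Type*} {s : Finset ι} {ℓ : ι → MvPolynomial σ K}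
    {F : MvPolynomial σ K} {n : ℕ} (hF : F.IsHomogeneous n) (hF0 : F ≠ 0) (hn : n ≤ s.card)
    (hℓ : ∀ i ∈ s, (ℓ i).IsHomogeneous 1) (hrel : (s : Set ι).Pairwise (IsRelPrime on ℓ))
    (hdvd : ∀ i ∈ s, ℓ i ∣ F) : Associated (∏ i ∈ s, ℓ i) F := by
  obtain ⟨G, rfl⟩ := Finset.prod_dvd_of_isRelPrime hrel hdvd
  have hP := left_ne_zero_of_mul hF0
  have hG := right_ne_zero_of_mul hF0
  have hPhom : (∏ i ∈ s, ℓ i).IsHomogeneous s.card := by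
    simpa using IsHomogeneous.prod s ℓ (fun _ => 1) hℓ
  have hdeg := totalDegree_mul_of_isDomain hP hG
  rw [hF.totalDegree hF0, hPhom.totalDegree hP] at hdeg
  have hGC := totalDegree_eq_zero_iff_eq_C.1 (by omega : G.totalDegree = 0)
  refine associated_mul_unit_right _ _ ?_
  rw [hGC] at hG ⊢
  exact (isUnit_iff_ne_zero.2 (C_ne_zero.1 hG)).map C

lemma exists_eq_C_mul_prod_of_squarefree {F : MvPolynomial σ K} {n : ℕ} (hF : F.IsHomogeneous n)
    (hsq : Squarefree F) (hlin : ∀ f, Irreducible f → f ∣ F → f.IsHomogeneous 1) :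
    ∃ c : K, c ≠ 0 ∧ ∃ ℓ : Fin n → MvPolynomial σ K,
      (∀ i, (ℓ i).IsHomogeneous 1 ∧ ℓ i ≠ 0) ∧ Pairwise (IsRelPrime on ℓ) ∧
        F = C c * ∏ i, ℓ i := by
  obtain ⟨s, hirr, hassoc⟩ := WfDvdMonoid.exists_factors F hsq.ne_zero
  obtain ⟨Q, rfl⟩ := Quot.exists_rep s
  obtain ⟨c, hc, hFc⟩ := exists_C_mul_of_associated hassoc
  let ℓ : Fin Q.length → MvPolynomial σ K := fun i => Q[i]
  have hFc : F = C c * ∏ i, ℓ i :=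
    hFc.trans (congrArg _ ((Multiset.prod_coe Q).trans (Fin.prod_univ_getElem Q).symm))
  have hdvd : ∏ i, ℓ i ∣ F := hFc ▸ dvd_mul_left _ _
  have hℓirr (i : Fin Q.length) : Irreducible (ℓ i) := hirr _ (Q.getElem_mem i.isLt)
  have hℓ (i : Fin Q.length) : (ℓ i).IsHomogeneous 1 :=
    hlin _ (hℓirr i) ((Finset.dvd_prod_of_mem _ (Finset.mem_univ i)).trans hdvd)
  obtain rfl : n = Q.length := by
    refine hF.inj_right ?_ hsq.ne_zero
    rw [hFc]
    simpa using (IsHomogeneous.prod Finset.univ ℓ (fun _ => 1) fun i _ => hℓ i).C_mul c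
  refine ⟨c, hc, ℓ, fun i => ⟨hℓ i, (hℓirr i).ne_zero⟩, fun i j hij g hi hj => ?_, hFc⟩
  refine hsq g ((mul_dvd_mul hi hj).trans (dvd_trans ?_ hdvd))
  rw [← Finset.prod_pair hij]
  exact Finset.prod_dvd_prod_of_subset _ _ _ (Finset.subset_univ _)

end Forms

section Line

variable {σ R S : Type*} [CommSemiring R] [CommSemiring S] [Algebra R S]

lemma prod_map_toMultiset {M : Type*} [CommMonoid M] (m : σ →₀ ℕ) (f : σ → M) :
    (m.toMultiset.map f).prod = m.prod fun k n => f k ^ n := by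
  rw [Finsupp.toMultiset_map, Finsupp.prod_toMultiset,
    Finsupp.prod_mapDomain_index pow_zero pow_add]

lemma coeff_prod_line_pow (m : σ →₀ ℕ) (u v : σ → S) :
    (m.prod fun k n => (Polynomial.C (u k) + Polynomial.C (v k) * Polynomial.X) ^ n).coeff
      m.degree = m.prod fun k n => v k ^ n := by
  have hdeg : ∀ p ∈ m.toMultiset.map fun k => Polynomial.C (u k) + Polynomial.C (v k) *
      Polynomial.X, p.natDegree ≤ 1 := by
    simp only [Multiset.mem_map]
    rintro _ ⟨k, -, rfl⟩
    compute_degree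
  have hcoeff := Polynomial.coeff_multiset_prod_of_natDegree_le _ 1 hdeg
  rw [Multiset.card_map, Finsupp.card_toMultiset, mul_one, Multiset.map_map, prod_map_toMultiset,
    prod_map_toMultiset] at hcoeff
  exact hcoeff.trans (by simp)

lemma coeff_aeval_line {F : MvPolynomial σ R} {d : ℕ} (hF : F.IsHomogeneous d) (u v : σ → S) :
    (aeval (fun k => Polynomial.C (u k) + Polynomial.C (v k) * Polynomial.X) F).coeff d =
      aeval v F := by
  rw [F.as_sum, map_sum, map_sum, Polynomial.finsetSum_coeff]
  refine Finset.sum_congr rfl fun m hm => ?_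
  rw [aeval_monomial, aeval_monomial, Polynomial.algebraMap_apply, Polynomial.coeff_C_mul,
    ← degree_of_mem_support hF hm, coeff_prod_line_pow]

end Line

-- At a root, differentiation lowers the multiplicity of a nonzero polynomial.
lemma eq_zero_of_dvd_mul_derivative {R : Type*} [CommRing R] [IsDomain R] [CharZero R]
    {w g : Polynomial R} {r : R} (hw : w.IsRoot r) (hg : ¬ g.IsRoot r)
    (h : w ∣ g * Polynomial.derivative w) : w = 0 := by
  by_contra hw0
  have hpos := (Polynomial.rootMultiplicity_pos hw0).2 hw
  have hw' : Polynomial.derivative w ≠ 0 := by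
    intro hd
    obtain ⟨c, rfl⟩ : ∃ c, w = Polynomial.C c := ⟨_, Polynomial.eq_C_of_derivative_eq_zero hd⟩
    exact hw0 (by simpa using hw)
  have hpow := (Polynomial.prime_X_sub_C r).pow_dvd_of_dvd_mul_left _
    (mt Polynomial.dvd_iff_isRoot.1 hg) ((Polynomial.pow_rootMultiplicity_dvd w r).trans h)
  have hle := (Polynomial.le_rootMultiplicity_iff hw').2 hpow
  rw [Polynomial.derivative_rootMultiplicity_of_root hw] at hle
  omega

section TangentField

variable {σ R : Type*} [CommRing R]

/-- The vector field `b ∂ᵢ - a ∂ⱼ`, tangent to the leaves of the foliation defined by the 1-form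
`a dxᵢ + b dxⱼ`. -/
def tangentField (i j : σ) (a b : MvPolynomial σ R) :
    Derivation R (MvPolynomial σ R) (MvPolynomial σ R) :=
  b • pderiv i - a • pderiv j

/-- The inflection polynomial of the foliation defined by `a dxᵢ + b dxⱼ`: the determinant
`a V(b) - b V(a)` of the tangent field `V = (b, -a)` and its derivative along itself, which
vanishes where a leaf has an inflection point. -/
def inflection (i j : σ) (a b : MvPolynomial σ R) : MvPolynomial σ R :=
  a * tangentField i j a b b - b * tangentField i j a b a

variable {i j : σ} {a b l : MvPolynomial σ R} {d : ℕ}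

lemma tangentField_apply (F : MvPolynomial σ R) :
    tangentField i j a b F = b * pderiv i F - a * pderiv j F := rfl

lemma isHomogeneous_tangentField {n : ℕ} (ha : a.IsHomogeneous d) (hb : b.IsHomogeneous d)
    {F : MvPolynomial σ R} (hF : F.IsHomogeneous n) :
    (tangentField i j a b F).IsHomogeneous (d + (n - 1)) :=
  (hb.mul hF.pderiv).sub (ha.mul hF.pderiv)

lemma isHomogeneous_inflection (ha : a.IsHomogeneous d) (hb : b.IsHomogeneous d) :
    (inflection i j a b).IsHomogeneous (d + (d + (d - 1))) :=
  (ha.mul (isHomogeneous_tangentField ha hb hb)).sub (hb.mul (isHomogeneous_tangentField ha hb ha))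

lemma pderiv_mul_inflection (hl : l.IsHomogeneous 1) :
    pderiv i l * inflection i j a b =
        a * tangentField i j a b (tangentField i j a b l) -
          tangentField i j a b l * tangentField i j a b a ∧
      pderiv j l * inflection i j a b =
        b * tangentField i j a b (tangentField i j a b l) -
          tangentField i j a b l * tangentField i j a b b := by
  obtain ⟨p, hp⟩ := exists_pderiv_eq_C hl i
  obtain ⟨q, hq⟩ := exists_pderiv_eq_C hl j
  have hVl : tangentField i j a b l = C p * b - C q * a := by
    rw [tangentField_apply, hp, hq, mul_comm b, mul_comm a]
  have hVVl : tangentField i j a b (tangentField i j a b l) =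
      C p * tangentField i j a b b - C q * tangentField i j a b a := by
    simp only [hVl, ← smul_eq_C_mul, map_sub, Derivation.map_smul]
  rw [hVVl, hVl, hp, hq, inflection]
  constructor <;> ring

/-- Restriction of polynomials to the tangent line `t ↦ x + t V(x)` at the generic point `x`, where
`V` is the tangent field of `a dxᵢ + b dxⱼ`. -/
def genericTangent (i j : σ) (a b : MvPolynomial σ R) :
    MvPolynomial σ R →ₐ[R] Polynomial (MvPolynomial σ R) :=
  aeval fun k => Polynomial.C (X k) + Polynomial.C (tangentField i j a b (X k)) * Polynomial.X

lemma coeff_zero_genericTangent (F : MvPolynomial σ R) :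
    (genericTangent i j a b F).coeff 0 = F := by
  induction F using MvPolynomial.induction_on with
  | C r => simp [genericTangent, Polynomial.algebraMap_apply, algebraMap_eq]
  | add F G hF hG => rw [map_add, Polynomial.coeff_add, hF, hG]
  | mul_X F k hF =>
    rw [map_mul, Polynomial.mul_coeff_zero, hF]
    simp [genericTangent]

lemma derivative_genericTangent (F : MvPolynomial σ R) :
    Polynomial.derivative (genericTangent i j a b F) =
      Polynomial.C b * genericTangent i j a b (pderiv i F) -
        Polynomial.C a * genericTangent i j a b (pderiv j F) := by
  classical
  induction F using MvPolynomial.induction_on with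
  | C r => simp [genericTangent, Polynomial.algebraMap_apply, algebraMap_eq]
  | add F G hF hG => rw [map_add, Polynomial.derivative_add, hF, hG]; simp only [map_add]; ring
  | mul_X F k hF =>
    have hX : Polynomial.derivative (genericTangent i j a b (X k)) =
        Polynomial.C b * genericTangent i j a b (pderiv i (X k)) -
          Polynomial.C a * genericTangent i j a b (pderiv j (X k)) := by
      simp only [genericTangent, aeval_X, tangentField_apply, pderiv_X, Pi.single_apply]
      split_ifs <;> simp
    simp only [map_mul, Polynomial.derivative_mul, hF, hX, Derivation.leibniz, map_add, smul_eq_mul]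
    ring

lemma coeff_genericTangent {F : MvPolynomial σ R} (hF : F.IsHomogeneous d) :
    (genericTangent i j a b F).coeff d = aeval (fun k => tangentField i j a b (X k)) F :=
  coeff_aeval_line hF _ _

-- Along the generic tangent line, `w = a φ(b) - b φ(a)` vanishes at the base point and divides a
-- multiple of its own derivative, so it vanishes identically; compare coefficients of `t ^ d`.
lemma mul_aeval_tangentField_eq [IsDomain R] [CharZero R] (ha : a.IsHomogeneous d)
    (hb : b.IsHomogeneous d) (hE : inflection i j a b = 0) :
    a * aeval (fun k => tangentField i j a b (X k)) b =
      b * aeval (fun k => tangentField i j a b (X k)) a := by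
  rcases eq_or_ne b 0 with rfl | hb0
  · rw [map_zero, mul_zero, zero_mul]
  let φ := genericTangent i j a b
  let w := Polynomial.C a * φ b - Polynomial.C b * φ a
  have hφE : φ a * (φ b * φ (pderiv i b) - φ a * φ (pderiv j b)) -
      φ b * (φ b * φ (pderiv i a) - φ a * φ (pderiv j a)) = 0 := by
    simpa only [inflection, tangentField_apply, map_sub, map_mul, map_zero] using congrArg φ hE
  have hroot : w.IsRoot 0 := by
    rw [Polynomial.IsRoot, ← Polynomial.coeff_zero_eq_eval_zero, Polynomial.coeff_sub,
      Polynomial.coeff_C_mul, Polynomial.coeff_C_mul, coeff_zero_genericTangent,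
      coeff_zero_genericTangent, mul_comm, sub_self]
  have hnotroot : ¬ (φ b ^ 2).IsRoot 0 := by
    rw [Polynomial.IsRoot, Polynomial.eval_pow, ← Polynomial.coeff_zero_eq_eval_zero,
      coeff_zero_genericTangent]
    exact pow_ne_zero 2 hb0
  have hdvd : w ∣ φ b ^ 2 * Polynomial.derivative w := by
    refine ⟨Polynomial.C b * φ b * (φ (pderiv i b) + φ (pderiv j a)) -
      (Polynomial.C a * φ b + Polynomial.C b * φ a) * φ (pderiv j b), ?_⟩
    simp only [w, φ, Polynomial.derivative_sub, Polynomial.derivative_C_mul,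
      derivative_genericTangent]
    linear_combination Polynomial.C b ^ 2 * hφE
  have hw : w = 0 := eq_zero_of_dvd_mul_derivative hroot hnotroot hdvd
  have hcoeff := congrArg (Polynomial.coeff · d) hw
  simp only [w, φ, Polynomial.coeff_sub, Polynomial.coeff_C_mul, coeff_genericTangent ha,
    coeff_genericTangent hb, Polynomial.coeff_zero] at hcoeff
  exact sub_eq_zero.1 hcoeff

end TangentField

section LineDivisibility

variable {σ K : Type*} [Field K] {i j : σ} {a b l g : MvPolynomial σ K}

lemma dvd_of_dvd_pderiv_mul {F : MvPolynomial σ K} (hl : l.IsHomogeneous 1)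
    (hl0 : pderiv i l ≠ 0 ∨ pderiv j l ≠ 0) (hi : g ∣ pderiv i l * F) (hj : g ∣ pderiv j l * F) :
    g ∣ F := by
  have isUnit_pderiv {k : σ} (hk : pderiv k l ≠ 0) : IsUnit (pderiv k l) := by
    obtain ⟨p, hp⟩ := exists_pderiv_eq_C hl k
    rw [hp] at hk ⊢
    exact (isUnit_iff_ne_zero.2 (C_ne_zero.1 hk)).map C
  rcases hl0 with h | h
  · exact (isUnit_pderiv h).dvd_mul_left.1 hi
  · exact (isUnit_pderiv h).dvd_mul_left.1 hj

lemma dvd_inflection (hl : l.IsHomogeneous 1) (hl0 : pderiv i l ≠ 0 ∨ pderiv j l ≠ 0)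
    (ha : g ∣ a * tangentField i j a b (tangentField i j a b l) -
      tangentField i j a b l * tangentField i j a b a)
    (hb : g ∣ b * tangentField i j a b (tangentField i j a b l) -
      tangentField i j a b l * tangentField i j a b b) :
    g ∣ inflection i j a b :=
  dvd_of_dvd_pderiv_mul hl hl0 ((pderiv_mul_inflection hl).1 ▸ ha)
    ((pderiv_mul_inflection hl).2 ▸ hb)

lemma dvd_inflection_of_dvd_tangentField (hl : l.IsHomogeneous 1)
    (hl0 : pderiv i l ≠ 0 ∨ pderiv j l ≠ 0) (h : l ∣ tangentField i j a b l) :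
    l ∣ inflection i j a b := by
  have hV : l ∣ tangentField i j a b (tangentField i j a b l) := by
    simpa using pow_dvd_derivation (m := 1) _ h (by simpa using h)
  exact dvd_inflection hl hl0 (dvd_sub (hV.mul_left _) (h.mul_right _))
    (dvd_sub (hV.mul_left _) (h.mul_right _))

lemma pow_succ_dvd_inflection {m : ℕ} (hl : l.IsHomogeneous 1)
    (hl0 : pderiv i l ≠ 0 ∨ pderiv j l ≠ 0) (ha : l ∣ a) (hb : l ∣ b)
    (h : l ^ m ∣ tangentField i j a b l) : l ^ (m + 1) ∣ inflection i j a b := by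
  have hdvd (F : MvPolynomial σ K) : l ∣ tangentField i j a b F :=
    dvd_sub (hb.mul_right _) (ha.mul_right _)
  have hV := pow_dvd_derivation (tangentField i j a b) (hdvd l) h
  refine dvd_inflection hl hl0 (dvd_sub ?_ ?_) (dvd_sub ?_ ?_)
  · exact pow_succ' l m ▸ mul_dvd_mul ha hV
  · exact pow_succ l m ▸ mul_dvd_mul h (hdvd a)
  · exact pow_succ' l m ▸ mul_dvd_mul hb hV
  · exact pow_succ l m ▸ mul_dvd_mul h (hdvd b)

end LineDivisibility

section Restriction

variable {R : Type*} [CommRing R]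

/-- Restriction of polynomials in `x, y, z` to `z = 0`. -/
def restrictInf : MvPolynomial (Fin 3) R →ₐ[R] MvPolynomial (Fin 2) R :=
  aeval ![X 0, X 1, 0]

lemma isHomogeneous_restrictInf {F : MvPolynomial (Fin 3) R} {n : ℕ} (hF : F.IsHomogeneous n) :
    (restrictInf F).IsHomogeneous n := by
  have hX (k : Fin 3) : (![X 0, X 1, 0] k : MvPolynomial (Fin 2) R).IsHomogeneous 1 := by
    fin_cases k
    exacts [isHomogeneous_X R 0, isHomogeneous_X R 1, isHomogeneous_zero _ _ _]
  exact one_mul n ▸ hF.aeval _ hX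

lemma X_two_dvd_of_restrictInf_eq_zero {F : MvPolynomial (Fin 3) R} (hF : restrictInf F = 0) :
    X 2 ∣ F := by
  rw [← Ideal.mem_span_singleton, ← Ideal.Quotient.eq_zero_iff_mem]
  let π := Ideal.Quotient.mkₐ R (Ideal.span {(X 2 : MvPolynomial (Fin 3) R)})
  have hπ : π = (π.comp (rename Fin.castSucc)).comp restrictInf := by
    ext k
    fin_cases k
    · simp [restrictInf]
    · simp [restrictInf]
    · simp only [restrictInf, AlgHom.comp_apply, aeval_X]
      simp [π]
  change π F = 0
  rw [hπ, AlgHom.comp_apply, hF, map_zero]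

lemma restrictInf_pderiv (k : Fin 2) (F : MvPolynomial (Fin 3) R) :
    restrictInf (pderiv k.castSucc F) = pderiv k (restrictInf F) := by
  induction F using MvPolynomial.induction_on with
  | C r => simp [restrictInf, algebraMap_eq]
  | add F G hF hG => simp only [map_add, hF, hG]
  | mul_X F m hF =>
    have hX : restrictInf (pderiv k.castSucc (X m : MvPolynomial (Fin 3) R)) =
        pderiv k (restrictInf (X m)) := by
      fin_cases k <;> fin_cases m <;> simp [restrictInf, pderiv_X]
    simp only [Derivation.leibniz, map_add, map_mul, smul_eq_mul, hF, hX]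

lemma restrictInf_tangentField (a b F : MvPolynomial (Fin 3) R) :
    restrictInf (tangentField 0 1 a b F) =
      tangentField 0 1 (restrictInf a) (restrictInf b) (restrictInf F) := by
  simp only [tangentField_apply, map_sub, map_mul, ← restrictInf_pderiv]
  rfl

lemma restrictInf_inflection (a b : MvPolynomial (Fin 3) R) :
    restrictInf (inflection 0 1 a b) = inflection 0 1 (restrictInf a) (restrictInf b) := by
  simp only [inflection, map_sub, map_mul, restrictInf_tangentField]

lemma restrictInf_pderiv_X_two_mul (F : MvPolynomial (Fin 3) R) :
    restrictInf (pderiv 2 (X 2 * F)) = restrictInf F := by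
  simp [restrictInf, Derivation.leibniz]

end Restriction

lemma isUnit_of_aeval_eq_zero {K S : Type*} [Field K] [CommRing S] [IsDomain S] [Algebra K S]
    [DecompositionMonoid S] {F : MvPolynomial (Fin 2) K} {n : ℕ} (hF : F.IsHomogeneous n)
    (hF0 : F ≠ 0) {u w : S} (hw : w ≠ 0) (hrel : IsRelPrime u w) (h : aeval ![u, w] F = 0) :
    IsUnit w := by
  obtain ⟨m, hm, hmin⟩ := F.support.exists_min_image (fun m => m 1) (support_nonempty.2 hF0)
  -- The term with the smallest power of `w` is divisible by the next power of `w`, as the rest are.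
  let term (m : Fin 2 →₀ ℕ) : S := algebraMap K S (coeff m F) * (u ^ m 0 * w ^ m 1)
  have hsum : ∑ m ∈ F.support, term m = 0 := by
    rw [aeval_def, eval₂_eq'] at h
    simpa only [Fin.prod_univ_two, Matrix.cons_val_zero, Matrix.cons_val_one] using h
  have hother : ∀ m' ∈ F.support.erase m, w ^ (m 1 + 1) ∣ term m' := by
    intro m' hm'
    obtain ⟨hne, hmem⟩ := Finset.mem_erase.1 hm'
    have hlt : m 1 < m' 1 := by
      refine (hmin m' hmem).lt_of_ne fun heq => hne ?_
      have hdeg := (degree_of_mem_support hF hmem).trans (degree_of_mem_support hF hm).symm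
      rw [Finsupp.degree_eq_sum, Finsupp.degree_eq_sum, Fin.sum_univ_two, Fin.sum_univ_two] at hdeg
      exact Finsupp.ext (Fin.forall_fin_two.2 ⟨by omega, heq.symm⟩)
    exact ((pow_dvd_pow w hlt).mul_left _).mul_left _
  have hterm : w ^ (m 1 + 1) ∣ term m := by
    rw [← F.support.add_sum_erase term hm] at hsum
    rw [eq_neg_of_add_eq_zero_left hsum, dvd_neg]
    exact Finset.dvd_sum hother
  have hcoeff : IsUnit (algebraMap K S (coeff m F)) :=
    (isUnit_iff_ne_zero.2 (mem_support_iff.1 hm)).map _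
  have hdvd : w ∣ u ^ m 0 := by
    rw [hcoeff.dvd_mul_left, pow_succ', mul_dvd_mul_iff_right (pow_ne_zero _ hw)] at hterm
    exact hterm
  exact hrel.pow_left hdvd dvd_rfl

lemma inflection_ne_zero {K : Type*} [Field K] [CharZero K] {d : ℕ} (hd : d ≠ 0)
    {a b : MvPolynomial (Fin 3) K} (ha : a.IsHomogeneous d) (hb : b.IsHomogeneous d)
    (hrel : IsRelPrime a b) (hc : X 0 * restrictInf a + X 1 * restrictInf b ≠ 0) :
    inflection 0 1 a b ≠ 0 := by
  intro hE
  have ha0 : a ≠ 0 := by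
    rintro rfl
    exact not_isUnit_of_isHomogeneous hb hd (hrel (dvd_zero b) dvd_rfl)
  have haeval (F : MvPolynomial (Fin 3) K) :
      aeval (fun k => tangentField 0 1 a b (X k)) F = aeval ![b, -a] (restrictInf F) := by
    rw [← AlgHom.comp_apply]
    congr 1
    ext k
    fin_cases k <;> simp [restrictInf, tangentField_apply, pderiv_X, Pi.single_apply]
  have hzero : aeval ![b, -a] (X 0 * restrictInf a + X 1 * restrictInf b) = 0 := by
    have := mul_aeval_tangentField_eq ha hb hE
    rw [haeval, haeval] at this
    simp only [map_add, map_mul, aeval_X, Matrix.cons_val_zero, Matrix.cons_val_one]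
    linear_combination -this
  have hhom : (X 0 * restrictInf a + X 1 * restrictInf b).IsHomogeneous (1 + d) :=
    ((isHomogeneous_X K 0).mul (isHomogeneous_restrictInf ha)).add
      ((isHomogeneous_X K 1).mul (isHomogeneous_restrictInf hb))
  exact not_isUnit_of_isHomogeneous ha.neg hd
    (isUnit_of_aeval_eq_zero hhom hc (neg_ne_zero.2 ha0) hrel.symm.neg_right hzero)

section Binary

variable {R : Type*} [CommRing R]

/-- The Jacobian determinant of two polynomials in two variables. -/
def jacobian (A B : MvPolynomial (Fin 2) R) : MvPolynomial (Fin 2) R :=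
  pderiv 0 A * pderiv 1 B - pderiv 1 A * pderiv 0 B

/-- Every irreducible factor `f` of the inflection polynomial of `A dx + B dy` is a linear form, to
which the foliation is tangent at least to the order of `f` in the inflection polynomial. -/
def HasInvariantInflection (A B : MvPolynomial (Fin 2) R) : Prop :=
  ∀ f, Irreducible f → f ∣ inflection 0 1 A B →
    f.IsHomogeneous 1 ∧ ∀ m, f ^ m ∣ inflection 0 1 A B → f ^ m ∣ tangentField 0 1 A B f

variable {A B l : MvPolynomial (Fin 2) R}

lemma pderiv_mul_jacobian (hl : l.IsHomogeneous 1) :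
    pderiv 0 l * jacobian A B = jacobian A (tangentField 0 1 A B l) ∧
      pderiv 1 l * jacobian A B = jacobian B (tangentField 0 1 A B l) := by
  obtain ⟨p, hp⟩ := exists_pderiv_eq_C hl 0
  obtain ⟨q, hq⟩ := exists_pderiv_eq_C hl 1
  simp only [jacobian, tangentField_apply, map_sub, Derivation.leibniz, hp, hq, pderiv_C,
    smul_eq_mul]
  constructor <;> ring

lemma pderiv_mul_radial (hl : l.IsHomogeneous 1) :
    pderiv 0 l * (X 0 * A + X 1 * B) = l * A + X 1 * tangentField 0 1 A B l ∧
      pderiv 1 l * (X 0 * A + X 1 * B) = l * B - X 0 * tangentField 0 1 A B l := by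
  have hEuler := hl.sum_X_mul_pderiv
  rw [Fin.sum_univ_two, one_smul] at hEuler
  rw [tangentField_apply]
  constructor
  · linear_combination A * hEuler
  · linear_combination B * hEuler

end Binary

section BinaryField

variable {K : Type*} [Field K] {A B l : MvPolynomial (Fin 2) K} {d : ℕ}

lemma pow_sub_one_dvd_jacobian {g : MvPolynomial (Fin 2) K} {m : ℕ} (hl : l.IsHomogeneous 1)
    (hl0 : pderiv 0 l ≠ 0 ∨ pderiv 1 l ≠ 0) (h : g ^ m ∣ tangentField 0 1 A B l) :
    g ^ (m - 1) ∣ jacobian A B := by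
  have hpderiv (k : Fin 2) : g ^ (m - 1) ∣ pderiv k (tangentField 0 1 A B l) :=
    pow_sub_one_dvd_derivation (pderiv k) h
  obtain ⟨h0, h1⟩ := pderiv_mul_jacobian (A := A) (B := B) hl
  refine dvd_of_dvd_pderiv_mul hl hl0 ?_ ?_
  · rw [h0]
    exact dvd_sub ((hpderiv 1).mul_left _) ((hpderiv 0).mul_left _)
  · rw [h1]
    exact dvd_sub ((hpderiv 1).mul_left _) ((hpderiv 0).mul_left _)

lemma pderiv_ne_zero_or_pderiv_ne_zero (hl : l.IsHomogeneous 1) (hl0 : l ≠ 0) :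
    pderiv 0 l ≠ 0 ∨ pderiv 1 l ≠ 0 := by
  by_contra! h
  have hEuler := hl.sum_X_mul_pderiv
  rw [Fin.sum_univ_two, h.1, h.2, one_smul, mul_zero, mul_zero, add_zero] at hEuler
  exact hl0 hEuler.symm

lemma associated_inflection [CharZero K] (hd : d ≠ 0) (hA : A.IsHomogeneous d)
    (hB : B.IsHomogeneous d) :
    Associated (inflection 0 1 A B) ((X 0 * A + X 1 * B) * jacobian A B) := by
  have hEuler : C (-d : K) * inflection 0 1 A B = (X 0 * A + X 1 * B) * jacobian A B := by
    have hEA := hA.sum_X_mul_pderiv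
    have hEB := hB.sum_X_mul_pderiv
    rw [Fin.sum_univ_two, nsmul_eq_mul] at hEA hEB
    rw [map_neg, map_natCast, inflection, jacobian, tangentField_apply, tangentField_apply]
    linear_combination (B * pderiv 0 B - A * pderiv 1 B) * hEA +
      (A * pderiv 1 A - B * pderiv 0 A) * hEB
  rw [← hEuler]
  exact associated_unit_mul_right _ _ ((isUnit_iff_ne_zero.2 (by simpa using hd)).map C)

lemma HasInvariantInflection.isRelPrime (hinv : HasInvariantInflection A B)
    (hE : inflection 0 1 A B ≠ 0) : IsRelPrime A B := by
  have hAB : A ≠ 0 ∨ B ≠ 0 := by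
    by_contra! h
    exact hE (by rw [inflection, h.1, h.2, sub_self])
  refine WfDvdMonoid.isRelPrime_of_no_irreducible_factors (by tauto) fun f hf hfA hfB => ?_
  have hfE : f ∣ inflection 0 1 A B := dvd_sub (hfA.mul_right _) (hfB.mul_right _)
  obtain ⟨hf1, hpow⟩ := hinv f hf hfE
  exact (FiniteMultiplicity.of_not_isUnit hf.not_isUnit hE).not_pow_dvd_of_multiplicity_lt
    (Nat.lt_succ_self _) (pow_succ_dvd_inflection hf1
      (pderiv_ne_zero_or_pderiv_ne_zero hf1 hf.ne_zero) hfA hfB (hpow _ (pow_multiplicity_dvd f _)))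

lemma HasInvariantInflection.dvd_of_dvd_jacobian [CharZero K]
    (hinv : HasInvariantInflection A B) (hd : d ≠ 0) (hA : A.IsHomogeneous d)
    (hB : B.IsHomogeneous d) (hl : l.IsHomogeneous 1) (hl0 : l ≠ 0)
    (h : l ∣ jacobian A B) : l ∣ X 0 * A + X 1 * B := by
  have hlE := (associated_inflection hd hA hB).symm.dvd_iff_dvd_right.1 (h.mul_left _)
  have hV : l ∣ tangentField 0 1 A B l := by
    simpa using (hinv l (irreducible_of_isHomogeneous_one hl hl0) hlE).2 1 (by simpa using hlE)
  obtain ⟨h0, h1⟩ := pderiv_mul_radial (A := A) (B := B) hl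
  refine dvd_of_dvd_pderiv_mul hl (pderiv_ne_zero_or_pderiv_ne_zero hl hl0) ?_ ?_
  · rw [h0]
    exact dvd_add (dvd_mul_right _ _) (hV.mul_left _)
  · rw [h1]
    exact dvd_sub (dvd_mul_right _ _) (hV.mul_left _)

lemma HasInvariantInflection.isHomogeneous_of_dvd [CharZero K]
    (hinv : HasInvariantInflection A B) (hd : d ≠ 0) (hA : A.IsHomogeneous d)
    (hB : B.IsHomogeneous d) {f : MvPolynomial (Fin 2) K} (hf : Irreducible f)
    (h : f ∣ X 0 * A + X 1 * B) : f.IsHomogeneous 1 :=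
  (hinv f hf ((associated_inflection hd hA hB).symm.dvd_iff_dvd_right.1 (h.mul_right _))).1

lemma HasInvariantInflection.squarefree [CharZero K] (hinv : HasInvariantInflection A B)
    (hE : inflection 0 1 A B ≠ 0) (hd : d ≠ 0) (hA : A.IsHomogeneous d) (hB : B.IsHomogeneous d) :
    Squarefree (X 0 * A + X 1 * B) := by
  have hassoc := associated_inflection hd hA hB
  have hc := left_ne_zero_of_mul (hassoc.ne_zero_iff.1 hE)
  refine (squarefree_iff_irreducible_sq_not_dvd_of_ne_zero hc).2 fun f hf hsq => ?_
  have hfE := hassoc.symm.dvd_iff_dvd_right.1 ((dvd_of_mul_left_dvd hsq).mul_right _)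
  obtain ⟨hf1, hpow⟩ := hinv f hf hfE
  set m := multiplicity f (inflection 0 1 A B)
  have hV : f ^ m ∣ tangentField 0 1 A B f := hpow m (pow_multiplicity_dvd f _)
  have hjac : f ^ (m - 1) ∣ jacobian A B :=
    pow_sub_one_dvd_jacobian hf1 (pderiv_ne_zero_or_pderiv_ne_zero hf1 hf.ne_zero) hV
  have hsucc : f ^ (m + 1) ∣ inflection 0 1 A B :=
    calc f ^ (m + 1) ∣ f * f * f ^ (m - 1) := by
          rw [← pow_two, ← pow_add]
          exact pow_dvd_pow f (by omega)
      _ ∣ (X 0 * A + X 1 * B) * jacobian A B := mul_dvd_mul hsq hjac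
      _ ∣ inflection 0 1 A B := hassoc.symm.dvd
  exact (FiniteMultiplicity.of_not_isUnit hf.not_isUnit hE).not_pow_dvd_of_multiplicity_lt
    (Nat.lt_succ_self m) hsucc

end BinaryField

section InvariantLines

open scoped Function

variable {K ι : Type*} [Field K] {a b : MvPolynomial (Fin 3) K} {d : ℕ} {s : Finset ι}
  {ℓ : ι → MvPolynomial (Fin 3) K}

lemma pderiv_castSucc_eq_C_iff {l : MvPolynomial (Fin 3) K} (hl : l.IsHomogeneous 1) {k : Fin 2}
    {r : K} : pderiv k.castSucc l = C r ↔ pderiv k (restrictInf l) = C r := by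
  obtain ⟨t, ht⟩ := exists_pderiv_eq_C hl k.castSucc
  have hC : restrictInf (C t : MvPolynomial (Fin 3) K) = C t := restrictInf.commutes t
  rw [← restrictInf_pderiv, ht, hC, C_inj, C_inj]

lemma associated_prod_restrictInf (ha : a.IsHomogeneous d) (hb : b.IsHomogeneous d)
    (hE : inflection 0 1 a b ≠ 0) (hs : 3 * d ≤ s.card + 1) (hℓ : ∀ i ∈ s, (ℓ i).IsHomogeneous 1)
    (hℓ0 : ∀ i ∈ s, restrictInf (ℓ i) ≠ 0) (hrel : (s : Set ι).Pairwise (IsRelPrime on ℓ))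
    (hinv : ∀ i ∈ s, ℓ i ∣ tangentField 0 1 a b (ℓ i)) :
    Associated (∏ i ∈ s, restrictInf (ℓ i))
      (inflection 0 1 (restrictInf a) (restrictInf b)) := by
  have hdvd : ∀ i ∈ s, ℓ i ∣ inflection 0 1 a b := by
    intro i hi
    have hpderiv (k : Fin 2) (hk : pderiv k (restrictInf (ℓ i)) ≠ 0) :
        pderiv k.castSucc (ℓ i) ≠ 0 := by
      simpa only [ne_eq, ← C_0, pderiv_castSucc_eq_C_iff (hℓ i hi)] using hk
    exact dvd_inflection_of_dvd_tangentField (hℓ i hi)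
      ((pderiv_ne_zero_or_pderiv_ne_zero (isHomogeneous_restrictInf (hℓ i hi)) (hℓ0 i hi)).imp
        (hpderiv 0) (hpderiv 1)) (hinv i hi)
  rw [← map_prod, ← restrictInf_inflection]
  exact (prod_associated_of_dvd (isHomogeneous_inflection ha hb) hE (by omega) hℓ hrel hdvd).map
    restrictInf

lemma prod_restrictInf_dvd_tangentField {f : MvPolynomial (Fin 2) K} (hf : f.IsHomogeneous 1)
    (hℓ : ∀ i ∈ s, (ℓ i).IsHomogeneous 1) (hassoc : ∀ i ∈ s, Associated f (restrictInf (ℓ i)))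
    (hrel : (s : Set ι).Pairwise (IsRelPrime on ℓ))
    (hinv : ∀ i ∈ s, ℓ i ∣ tangentField 0 1 a b (ℓ i)) :
    ∏ i ∈ s, restrictInf (ℓ i) ∣ tangentField 0 1 (restrictInf a) (restrictInf b) f := by
  obtain ⟨p, hp⟩ := exists_pderiv_eq_C hf 0
  obtain ⟨q, hq⟩ := exists_pderiv_eq_C hf 1
  have hrestrict : restrictInf (b * C p - a * C q) =
      tangentField 0 1 (restrictInf a) (restrictInf b) f := by
    rw [tangentField_apply, hp, hq, map_sub, map_mul, map_mul]
    exact congr_arg₂ _ (congrArg _ (restrictInf.commutes p)) (congrArg _ (restrictInf.commutes q))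
  rw [← map_prod, ← hrestrict]
  refine map_dvd _ (Finset.prod_dvd_of_isRelPrime hrel fun i hi => ?_)
  obtain ⟨t, ht, hft⟩ := exists_C_mul_of_associated (hassoc i hi)
  have hpderiv {k : Fin 2} {r : K} (hr : pderiv k f = C r) :
      pderiv k.castSucc (ℓ i) = C (t * r) := by
    rw [pderiv_castSucc_eq_C_iff (hℓ i hi), hft, pderiv_C_mul, hr, C_mul]
  have hV : tangentField 0 1 a b (ℓ i) = C t * (b * C p - a * C q) := by
    have h0 : pderiv 0 (ℓ i) = C (t * p) := hpderiv (k := 0) hp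
    have h1 : pderiv 1 (ℓ i) = C (t * q) := hpderiv (k := 1) hq
    rw [tangentField_apply, h0, h1, C_mul, C_mul]
    ring
  exact ((isUnit_iff_ne_zero.2 ht).map C).dvd_mul_left.1 (hV ▸ hinv i hi)

lemma hasInvariantInflection_restrictInf
    (hprod : Associated (∏ i ∈ s, restrictInf (ℓ i))
      (inflection 0 1 (restrictInf a) (restrictInf b)))
    (hℓ : ∀ i ∈ s, (ℓ i).IsHomogeneous 1) (hℓ0 : ∀ i ∈ s, restrictInf (ℓ i) ≠ 0)
    (hrel : (s : Set ι).Pairwise (IsRelPrime on ℓ))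
    (hinv : ∀ i ∈ s, ℓ i ∣ tangentField 0 1 a b (ℓ i)) :
    HasInvariantInflection (restrictInf a) (restrictInf b) := by
  classical
  have hassoc {f : MvPolynomial (Fin 2) K} (hf : Irreducible f) {i : ι} (hi : i ∈ s)
      (hfi : f ∣ restrictInf (ℓ i)) : Associated f (restrictInf (ℓ i)) :=
    hf.associated_of_dvd (irreducible_of_isHomogeneous_one
      (isHomogeneous_restrictInf (hℓ i hi)) (hℓ0 i hi)) hfi
  intro f hf hfE
  have hf1 : f.IsHomogeneous 1 := by
    obtain ⟨i, hi, hfi⟩ := hf.prime.exists_mem_finset_dvd (hprod.symm.dvd_iff_dvd_right.1 hfE)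
    exact isHomogeneous_of_associated (hassoc hf hi hfi).symm (isHomogeneous_restrictInf (hℓ i hi))
  refine ⟨hf1, fun m hm => ?_⟩
  have hmul : f ^ m ∣ ∏ i ∈ s with f ∣ restrictInf (ℓ i), restrictInf (ℓ i) := by
    rw [← hprod.dvd_iff_dvd_right, ← Finset.prod_filter_mul_prod_filter_not s
      (fun i => f ∣ restrictInf (ℓ i))] at hm
    refine hf.prime.pow_dvd_of_dvd_mul_right _ (fun hdvd => ?_) hm
    obtain ⟨i, hi, hfi⟩ := hf.prime.exists_mem_finset_dvd hdvd
    exact (Finset.mem_filter.1 hi).2 hfi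
  refine hmul.trans (prod_restrictInf_dvd_tangentField hf1 (fun i hi => ?_) (fun i hi => ?_)
    (hrel.mono (Finset.coe_subset.2 (Finset.filter_subset _ _))) fun i hi => ?_)
  all_goals obtain ⟨his, hfi⟩ := Finset.mem_filter.1 hi
  exacts [hℓ i his, hassoc hf his hfi, hinv i his]

lemma card_le_card_filter_restrictInf_ne_zero_add_one [Fintype ι]
    (hrel : Pairwise (IsRelPrime on ℓ)) [DecidablePred fun i => restrictInf (ℓ i) ≠ 0] :
    Fintype.card ι ≤ (Finset.univ.filter fun i => restrictInf (ℓ i) ≠ 0).card + 1 := by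
  have hle : (Finset.univ.filter fun i => ¬ restrictInf (ℓ i) ≠ 0).card ≤ 1 := by
    refine Finset.card_le_one.2 fun i hi j hj => ?_
    simp only [ne_eq, not_not, Finset.mem_filter, Finset.mem_univ, true_and] at hi hj
    by_contra hij
    exact not_isUnit_of_isHomogeneous (isHomogeneous_X K 2) one_ne_zero
      (hrel hij (X_two_dvd_of_restrictInf_eq_zero hi) (X_two_dvd_of_restrictInf_eq_zero hj))
  have hsum := Finset.univ.card_filter_add_card_filter_not fun i => restrictInf (ℓ i) ≠ 0
  rw [Finset.card_univ] at hsum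
  omega

lemma dvd_tangentField_of_X_two_mul {l : MvPolynomial (Fin 3) K} (hl : l.IsHomogeneous 1)
    (hl0 : restrictInf l ≠ 0) (h : l ∣ tangentField 0 1 (X 2 * a) (X 2 * b) l) :
    l ∣ tangentField 0 1 a b l := by
  have hirr := irreducible_of_isHomogeneous_one hl (ne_zero_of_map hl0)
  have hX := irreducible_of_isHomogeneous_one (isHomogeneous_X K (2 : Fin 3)) (X_ne_zero 2)
  have hndvd : ¬ l ∣ X 2 := by
    intro hdvd
    obtain ⟨g, rfl⟩ := (hirr.associated_of_dvd hX hdvd).symm.dvd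
    exact hl0 (by simp [restrictInf])
  have hV : tangentField 0 1 (X 2 * a) (X 2 * b) l = X 2 * tangentField 0 1 a b l := by
    rw [tangentField_apply, tangentField_apply]
    ring
  exact (hirr.prime.dvd_or_dvd (hV ▸ h)).resolve_left hndvd

end InvariantLines

section LineAtInfinity

variable {K : Type*} [Field K] {a b c : MvPolynomial (Fin 3) K}

lemma eq_neg_of_euler (h : X 0 * (X 2 * a) + X 1 * (X 2 * b) + X 2 * c = 0) :
    c = -(X 0 * a + X 1 * b) :=
  mul_left_cancel₀ (X_ne_zero 2) (by linear_combination h)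

lemma isRelPrime_of_euler (h : X 0 * (X 2 * a) + X 1 * (X 2 * b) + X 2 * c = 0)
    (hcop : ∀ f, f ∣ X 2 * a → f ∣ X 2 * b → f ∣ c → IsUnit f) : IsRelPrime a b := by
  intro f hfa hfb
  refine hcop f (hfa.mul_left _) (hfb.mul_left _) ?_
  rw [eq_neg_of_euler h, dvd_neg]
  exact dvd_add (hfa.mul_left _) (hfb.mul_left _)

lemma radial_restrictInf_of_euler (h : X 0 * (X 2 * a) + X 1 * (X 2 * b) + X 2 * c = 0) :
    X 0 * restrictInf a + X 1 * restrictInf b = -restrictInf c := by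
  rw [eq_neg_of_euler h]
  simp [restrictInf]

lemma restrictInf_ne_zero_of_dvd (hcop : ∀ f, f ∣ a → f ∣ b → f ∣ c → IsUnit f) (ha : X 2 ∣ a)
    (hb : X 2 ∣ b) : restrictInf c ≠ 0 := fun hc =>
  not_isUnit_of_isHomogeneous (isHomogeneous_X K 2) one_ne_zero
    (hcop (X 2) ha hb (X_two_dvd_of_restrictInf_eq_zero hc))

end LineAtInfinity

section Main

open scoped Function

theorem reduced_convex_degenerates_to_convex_homogeneous_general {K ι : Type*} [Field K]
    [CharZero K] [Fintype ι] {d : ℕ} (hd : 1 ≤ d) {a b c : MvPolynomial (Fin 3) K}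
    (ha : a.IsHomogeneous (d + 1)) (hb : b.IsHomogeneous (d + 1))
    (hcop : ∀ p, p ∣ a → p ∣ b → p ∣ c → IsUnit p)
    (hEuler : X 0 * a + X 1 * b + X 2 * c = 0)
    {ℓ : ι → MvPolynomial (Fin 3) K} (hcard : 3 * d ≤ Fintype.card ι)
    (hℓ : ∀ i, (ℓ i).IsHomogeneous 1) (hrel : Pairwise (IsRelPrime on ℓ))
    (hinv : ∀ i, ℓ i ∣ tangentField 0 1 a b (ℓ i))
    (hza : X 2 ∣ a) (hzb : X 2 ∣ b) :
    let A := restrictInf (pderiv 2 a)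
    let B := restrictInf (pderiv 2 b)
    A.IsHomogeneous d ∧ B.IsHomogeneous d ∧ X 0 * A + X 1 * B = -restrictInf c ∧
    IsRelPrime A B ∧
    (∀ l, l.IsHomogeneous 1 → l ≠ 0 → l ∣ jacobian A B → l ∣ X 0 * A + X 1 * B) ∧
    Squarefree (X 0 * A + X 1 * B) ∧
    ∃ c₀ : K, c₀ ≠ 0 ∧ ∃ m : Fin (d + 1) → MvPolynomial (Fin 2) K,
      (∀ i, (m i).IsHomogeneous 1 ∧ m i ≠ 0) ∧ Pairwise (IsRelPrime on m) ∧
        X 0 * A + X 1 * B = C c₀ * ∏ i, m i := by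
  classical
  have hd0 : d ≠ 0 := by omega
  have hc := restrictInf_ne_zero_of_dvd hcop hza hzb
  obtain ⟨a, rfl⟩ := hza
  obtain ⟨b, rfl⟩ := hzb
  rw [restrictInf_pderiv_X_two_mul, restrictInf_pderiv_X_two_mul]
  intro A B
  have ha := isHomogeneous_of_X_mul ha
  have hb := isHomogeneous_of_X_mul hb
  have hA : A.IsHomogeneous d := isHomogeneous_restrictInf ha
  have hB : B.IsHomogeneous d := isHomogeneous_restrictInf hb
  have hAB : X 0 * A + X 1 * B = -restrictInf c := radial_restrictInf_of_euler hEuler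
  have hE : inflection 0 1 a b ≠ 0 :=
    inflection_ne_zero hd0 ha hb (isRelPrime_of_euler hEuler hcop) (hAB ▸ neg_ne_zero.2 hc)
  let s := Finset.univ.filter fun i => restrictInf (ℓ i) ≠ 0
  have hs : 3 * d ≤ s.card + 1 :=
    hcard.trans (card_le_card_filter_restrictInf_ne_zero_add_one hrel)
  have hℓ0 : ∀ i ∈ s, restrictInf (ℓ i) ≠ 0 := fun i hi => (Finset.mem_filter.1 hi).2
  have hV : ∀ i ∈ s, ℓ i ∣ tangentField 0 1 a b (ℓ i) := fun i hi =>
    dvd_tangentField_of_X_two_mul (hℓ i) (hℓ0 i hi) (hinv i)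
  have hprod := associated_prod_restrictInf ha hb hE hs (fun i _ => hℓ i) hℓ0
    (hrel.set_pairwise _) hV
  have hEAB : inflection 0 1 A B ≠ 0 := hprod.ne_zero_iff.1 (Finset.prod_ne_zero_iff.2 hℓ0)
  have hinvAB : HasInvariantInflection A B :=
    hasInvariantInflection_restrictInf hprod (fun i _ => hℓ i) hℓ0 (hrel.set_pairwise _) hV
  have hsq := hinvAB.squarefree hEAB hd0 hA hB
  have hhom : (X 0 * A + X 1 * B).IsHomogeneous (d + 1) := add_comm 1 d ▸
    ((isHomogeneous_X K 0).mul hA).add ((isHomogeneous_X K 1).mul hB)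
  exact ⟨hA, hB, hAB, hinvAB.isRelPrime hEAB,
    fun l hl hl0 h => hinvAB.dvd_of_dvd_jacobian hd0 hA hB hl hl0 h, hsq,
    exists_eq_C_mul_prod_of_squarefree hhom hsq fun f hf h =>
      hinvAB.isHomogeneous_of_dvd hd0 hA hB hf h⟩

end Main

lemma isHomogeneous_lin (l : Fin 3 → ℂ) : (lin l).IsHomogeneous 1 :=
  (((isHomogeneous_X ℂ 0).C_mul _).add ((isHomogeneous_X ℂ 1).C_mul _)).add
    ((isHomogeneous_X ℂ 2).C_mul _)

lemma pderiv_lin (l : Fin 3 → ℂ) (k : Fin 3) : pderiv k (lin l) = C (l k) := by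
  fin_cases k <;> simp [lin, pderiv_X]

lemma isRelPrime_lin {l m : Fin 3 → ℂ} (hl : l ≠ 0) (hm : m ≠ 0) (hlm : ∀ t : ℂ, l ≠ t • m) :
    IsRelPrime (lin l) (lin m) := by
  have hirr {l : Fin 3 → ℂ} (hl : l ≠ 0) : Irreducible (lin l) := by
    refine irreducible_of_isHomogeneous_one (isHomogeneous_lin l) fun h => hl (funext fun k => ?_)
    exact C_eq_zero.1 (by rw [← pderiv_lin, h, map_zero])
  rw [(hirr hl).isRelPrime_iff_not_dvd]
  intro hdvd
  obtain ⟨t, -, ht⟩ := exists_C_mul_of_associated ((hirr hl).associated_of_dvd (hirr hm) hdvd).symm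
  refine hlm t (funext fun k => C_injective (Fin 3) ℂ ?_)
  rw [← pderiv_lin, ht, pderiv_C_mul, pderiv_lin, ← C_mul]
  rfl

lemma InvLine.dvd_tangentField {a b c : P3} {l : Fin 3 → ℂ} (h : InvLine a b c l) :
    lin l ∣ tangentField 0 1 a b (lin l) := by
  rw [tangentField_apply, pderiv_lin, pderiv_lin, ← dvd_neg, neg_sub, mul_comm a, mul_comm b]
  exact h.2.1

lemma not_proportional_of_isRelPrime {l m : P2} (hl : ¬ IsUnit l) (hm : ¬ IsUnit m)
    (h : IsRelPrime l m) : ¬ Proportional l m := by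
  rintro ⟨t, rfl | rfl⟩
  · exact hm (h (dvd_mul_left _ _) dvd_rfl)
  · exact hl (h dvd_rfl (dvd_mul_left _ _))

/-- If `F` is a reduced convex foliation of degree `d ≥ 1` leaving the line `z = 0`
invariant, then `A_d = (∂a/∂z)(x,y,0)`, `B_d = (∂b/∂z)(x,y,0)` are homogeneous of degree
`d` with `xA_d + yB_d = −c(x,y,0)`; they are coprime; the homogeneous foliation
`A_d dx + B_d dy` is convex; and `xA_d + yB_d` is squarefree, being a product of `d+1`
pairwise non-proportional linear forms. -/
theorem reduced_convex_degenerates_to_convex_homogeneous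
    (d : ℕ) (hd : 1 ≤ d) (a b c : P3) (hfol : IsFoliation d a b c)
    (L : Fin (3 * d) → (Fin 3 → ℂ))
    (hinv : ∀ i, InvLine a b c (L i))
    (hnp : ∀ i j, i ≠ j → ∀ t : ℂ, L i ≠ t • L j)
    (hza : (X 2 : P3) ∣ a) (hzb : (X 2 : P3) ∣ b) :
    (atZ0 (pderiv 2 a)).IsHomogeneous d ∧ (atZ0 (pderiv 2 b)).IsHomogeneous d ∧
    X 0 * atZ0 (pderiv 2 a) + X 1 * atZ0 (pderiv 2 b) = -atZ0 c ∧
    NoCommonFactor (atZ0 (pderiv 2 a)) (atZ0 (pderiv 2 b)) ∧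
    IsConvexPair (atZ0 (pderiv 2 a)) (atZ0 (pderiv 2 b)) ∧
    Squarefree (X 0 * atZ0 (pderiv 2 a) + X 1 * atZ0 (pderiv 2 b)) ∧
    ∃ c₀ : ℂ, c₀ ≠ 0 ∧ ∃ ℓ : Fin (d + 1) → P2,
      (∀ i, (ℓ i).IsHomogeneous 1 ∧ ℓ i ≠ 0) ∧
      (∀ i j, i ≠ j → ¬ Proportional (ℓ i) (ℓ j)) ∧
      X 0 * atZ0 (pderiv 2 a) + X 1 * atZ0 (pderiv 2 b) = C c₀ * ∏ i, ℓ i := by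
  obtain ⟨ha, hb, -, hcop, hEuler⟩ := hfol
  obtain ⟨hA, hB, hAB, hrel, hconv, hsq, c₀, hc₀, m, hm, hmrel, hprod⟩ :=
    reduced_convex_degenerates_to_convex_homogeneous_general hd ha hb hcop hEuler
      (Fintype.card_fin _).ge (fun i => isHomogeneous_lin (L i))
      (fun i j hij => isRelPrime_lin (hinv i).1 (hinv j).1 (hnp i j hij))
      (fun i => (hinv i).dvd_tangentField) hza hzb
  have hunit (i : Fin (d + 1)) : ¬ IsUnit (m i) :=
    not_isUnit_of_isHomogeneous (hm i).1 one_ne_zero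
  exact ⟨hA, hB, hAB, fun p hpA hpB => hrel hpA hpB, hconv, hsq, c₀, hc₀, m, hm, fun i j hij =>
    not_proportional_of_isRelPrime (hunit i) (hunit j) (hmrel hij), hprod⟩
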